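/- arXiv:2306.16889 — 2 statements merged into one kernel-verified Lean document; each statement's English description precedes it below -/
import Mathlib

section
/- ∑_{k=1}^∞ (27/4)^k / (k² · C(3k,k)) = 2π²/3 − 2·(log 2)². -/
open Real

/-- The integrand of the (real) dilogarithm. -/
noncomputable def gAux (t : ℝ) : ℝ := -Real.log (1 - t) / t

/-- The real part of the dilogarithm, as an integral. -/
noncomputable def LAux (x : ℝ) : ℝ := ∫ t in (0:ℝ)..x, gAux t

theorem gAux_meas : Measurable gAux := by
  unfold gAux
  fun_prop

theorem gAux_int : IntervalIntegrable gAux MeasureTheory.volume 0 3 := by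
  have h1 : IntervalIntegrable gAux MeasureTheory.volume 0 (1/2) := by
    refine IntervalIntegrable.mono_fun (g := gAux)
      (f := fun _ : ℝ => (2:ℝ)) (by simp) gAux_meas.aestronglyMeasurable ?_
    refine (MeasureTheory.ae_restrict_iff' measurableSet_uIoc).2 (Filter.Eventually.of_forall ?_)
    intro t ht
    rw [Set.uIoc_of_le (by norm_num)] at ht
    obtain ⟨ht0, ht1⟩ := ht
    have hlog : -Real.log (1 - t) ≤ 2 * t := by
      have h := Real.one_sub_inv_le_log_of_pos (x := 1 - t) (by linarith)
      have h3 : (1 - t)⁻¹ ≤ 1 + 2 * t := by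
        rw [inv_le_iff_one_le_mul₀ (by linarith)]
        nlinarith
      linarith
    have hlog0 : 0 ≤ -Real.log (1 - t) := by
      have := Real.log_nonpos (x := 1 - t) (by linarith) (by linarith)
      linarith
    simp only [gAux]
    rw [Real.norm_of_nonneg (by positivity), Real.norm_of_nonneg (by norm_num)]
    rw [div_le_iff₀ ht0]
    exact hlog
  have h2 : IntervalIntegrable gAux MeasureTheory.volume (1/2) 3 := by
    have h := (intervalIntegral.intervalIntegrable_log' (a := 1/2) (b := -2)).comp_sub_left 1
    have h' : IntervalIntegrable (fun x : ℝ => Real.log (1 - x)) MeasureTheory.volume (1/2) 3 := by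
      convert! h using 1 <;> norm_num
    have hc : ContinuousOn (fun x : ℝ => -x⁻¹) (Set.uIcc (1/2) 3) := by
      rw [Set.uIcc_of_le (by norm_num)]
      refine (continuousOn_inv₀.mono ?_).neg
      intro x hx
      simp only [Set.mem_compl_iff, Set.mem_singleton_iff]
      have := hx.1
      intro h0
      rw [h0] at this
      norm_num at this
    have := h'.mul_continuousOn hc
    refine this.congr (fun x _ => ?_)
    unfold gAux
    simp only [div_eq_mul_inv]
    ring
  exact h1.trans h2

theorem gAux_int' {a b : ℝ} (ha : a ∈ Set.Icc (0:ℝ) 3) (hb : b ∈ Set.Icc (0:ℝ) 3) :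
    IntervalIntegrable gAux MeasureTheory.volume a b := by
  refine gAux_int.mono_set ?_
  rw [← Set.uIcc_of_le (by norm_num : (0:ℝ) ≤ 3)] at ha hb
  exact Set.uIcc_subset_uIcc ha hb

theorem LAux_cont : ContinuousOn LAux (Set.Icc 0 3) := by
  have := intervalIntegral.continuousOn_primitive_interval' gAux_int Set.left_mem_uIcc
  rwa [Set.uIcc_of_le (by norm_num)] at this

theorem LAux_deriv {x : ℝ} (h0 : 0 < x) (h3 : x < 3) (h1 : x ≠ 1) :
    HasDerivAt LAux (gAux x) x := by
  refine intervalIntegral.integral_hasDerivAt_right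
    (gAux_int' ⟨le_rfl, by norm_num⟩ ⟨h0.le, h3.le⟩)
    (gAux_meas.stronglyMeasurable.stronglyMeasurableAtFilter) ?_
  unfold gAux
  have : 1 - x ≠ 0 := sub_ne_zero.2 (Ne.symm h1)
  have h0' : x ≠ 0 := h0.ne'
  fun_prop (disch := assumption)

theorem eq_of_deriv_zero {f : ℝ → ℝ} {a b : ℝ} (hab : a < b) (hc : ContinuousOn f (Set.Icc a b))
    (hd : ∀ x ∈ Set.Ioo a b, HasDerivAt f 0 x) : f b = f a := by
  obtain ⟨c, _, h⟩ := exists_hasDerivAt_eq_slope f (fun _ => 0) hab hc hd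
  have : b - a ≠ 0 := by linarith
  field_simp at h
  linarith

theorem hasSum_aux {F : ℕ → ℝ → ℝ} {f : ℝ → ℝ} (hF : ∀ n, Continuous (F n))
    (h0 : ∀ n, ∀ x ∈ Set.Ioc (0:ℝ) 1, 0 ≤ F n x)
    (hf : IntervalIntegrable f MeasureTheory.volume 0 1)
    (hs : ∀ᵐ x ∂MeasureTheory.volume, x ∈ Set.Ioc (0:ℝ) 1 → HasSum (fun n => F n x) (f x)) :
    HasSum (fun n => ∫ x in (0:ℝ)..1, F n x) (∫ x in (0:ℝ)..1, f x) := by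
  have hu : Set.uIoc (0:ℝ) 1 = Set.Ioc 0 1 := Set.uIoc_of_le (by norm_num)
  refine intervalIntegral.hasSum_integral_of_dominated_convergence F
    (fun n => (hF n).aestronglyMeasurable) ?_ ?_ ?_ ?_
  · intro n
    refine Filter.Eventually.of_forall fun t ht => ?_
    rw [hu] at ht
    rw [Real.norm_of_nonneg (h0 n t ht)]
  · filter_upwards [hs] with x hx hm
    rw [hu] at hm
    exact (hx hm).summable
  · refine hf.congr_ae ?_
    refine (MeasureTheory.ae_restrict_iff' measurableSet_uIoc).2 ?_
    filter_upwards [hs] with x hx hm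
    rw [hu] at hm
    exact (hx hm).tsum_eq.symm
  · rw [hu]
    exact hs

theorem ae_ne (c : ℝ) : ∀ᵐ x : ℝ ∂MeasureTheory.volume, x ≠ c := by
  simp [MeasureTheory.ae_iff]

theorem LAux_one : LAux 1 = π ^ 2 / 6 := by
  have h : HasSum (fun n : ℕ => ∫ x in (0:ℝ)..1, x ^ n / ((n:ℝ) + 1)) (LAux 1) := by
    refine hasSum_aux (fun n => by fun_prop) ?_
      (gAux_int' ⟨le_rfl, by norm_num⟩ ⟨by norm_num, by norm_num⟩) ?_
    · intro n x hx
      have := hx.1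
      positivity
    · filter_upwards [ae_ne 1] with x hx1 hx
      have h0 := hx.1
      have h1 : x < 1 := lt_of_le_of_ne hx.2 hx1
      have := (Real.hasSum_pow_div_log_of_abs_lt_one (x := x)
        (by rw [abs_of_pos h0]; exact h1)).div_const x
      unfold gAux
      convert! this using 2 with n
      rw [pow_succ]
      field_simp
  have h2 := hasSum_zeta_two
  rw [← hasSum_nat_add_iff' 1] at h2
  simp only [Finset.range_one, Finset.sum_singleton, Nat.cast_zero] at h2
  refine (h.unique ?_)
  convert! h2 using 1
  · ext n
    rw [intervalIntegral.integral_div, integral_pow]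
    push_cast
    simp
    field_simp
  · simp

theorem LAux_two : LAux 2 + LAux (1/2) = π ^ 2 / 3 - (Real.log 2)^2 / 2 := by
  have h := eq_of_deriv_zero (f := fun x => LAux x + LAux (1/x) + (Real.log x)^2 / 2)
    (a := 1) (b := 2) (by norm_num) ?_ ?_
  · simp only [LAux_one] at h
    norm_num [LAux_one] at h ⊢
    linarith
  · refine ContinuousOn.add (ContinuousOn.add ?_ ?_) ?_
    · exact LAux_cont.mono (Set.Icc_subset_Icc (by norm_num) (by norm_num))
    · refine LAux_cont.comp (f := fun x : ℝ => 1/x) ?_ ?_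
      · intro x hx
        have : x ≠ 0 := by have := hx.1; linarith
        exact ContinuousAt.continuousWithinAt (by fun_prop (disch := assumption))
      · intro x hx
        have h1 := hx.1
        refine ⟨by positivity, ?_⟩
        rw [div_le_iff₀ (by linarith)]
        linarith
    · intro x hx
      have : x ≠ 0 := by have := hx.1; linarith
      exact ContinuousAt.continuousWithinAt (by fun_prop (disch := assumption))
  · intro x hx
    obtain ⟨h1, h2⟩ := hx
    have hx0 : x ≠ 0 := by linarith
    have d1 := LAux_deriv (x := x) (by linarith) (by linarith) (by linarith)
    have hl : 1 / x < 1 := by rw [div_lt_one (by linarith)]; exact h1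
    have d2 := (LAux_deriv (x := 1/x) (by positivity) (by linarith) (by linarith)).comp x
      ((hasDerivAt_const x (1:ℝ)).div (hasDerivAt_id x) hx0)
    have d3 := ((Real.hasDerivAt_log hx0).pow 2).div_const 2
    convert! (d1.add d2).add d3 using 1
    have e : Real.log (1 - 1/x) = Real.log (1 - x) - Real.log x := by
      rw [← Real.log_div (by linarith) hx0, ← Real.log_neg_eq_log ((1-x)/x)]
      congr 1
      field_simp
      ring
    simp only [gAux, e, id]
    field_simp
    ring

theorem LAux_three : 2 * LAux 3 + LAux (3/4) =
    2 * LAux 2 + 2 * LAux (1/2) - (Real.log 2)^2 := by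
  have h := eq_of_deriv_zero
    (f := fun x => 2 * LAux (1 + 1/x) + LAux (1 - x^2) - 2 * LAux (1 - x) + (Real.log x)^2)
    (a := 1/2) (b := 1) (by norm_num) ?_ ?_
  · have e : Real.log (1/2) = -Real.log 2 := by
      rw [one_div, Real.log_inv]
    simp only [e] at h
    have e0 : LAux 0 = 0 := by simp [LAux]
    norm_num [e0] at h ⊢
    linarith
  · refine ContinuousOn.add (ContinuousOn.sub (ContinuousOn.add (continuousOn_const.mul ?_) ?_)
      (continuousOn_const.mul ?_)) ?_
    · refine LAux_cont.comp (f := fun x : ℝ => 1 + 1/x) ?_ ?_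
      · intro x hx
        have : x ≠ 0 := by have := hx.1; linarith
        exact ContinuousAt.continuousWithinAt (by fun_prop (disch := assumption))
      · intro x hx
        have h1 := hx.1
        have : 1 / x ≤ 2 := by
          rw [div_le_iff₀ (by linarith)]
          linarith
        have hp : 0 < x := by linarith
        exact ⟨by positivity, by linarith⟩
    · refine LAux_cont.comp (f := fun x : ℝ => 1 - x^2) (by fun_prop) ?_
      intro x hx
      obtain ⟨h1, h2⟩ := hx
      exact ⟨by nlinarith, by nlinarith⟩
    · refine LAux_cont.comp (f := fun x : ℝ => 1 - x) (by fun_prop) ?_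
      intro x hx
      obtain ⟨h1, h2⟩ := hx
      exact ⟨by linarith, by linarith⟩
    · intro x hx
      have : x ≠ 0 := by have := hx.1; linarith
      exact ContinuousAt.continuousWithinAt (by fun_prop (disch := assumption))
  · intro x hx
    obtain ⟨h1, h2⟩ := hx
    have hp : 0 < x := by linarith
    have hx0 : x ≠ 0 := by linarith
    have hl : 1 / x < 2 := by rw [div_lt_iff₀ hp]; linarith
    have hl' : 0 < 1 / x := by positivity
    have d1 := (LAux_deriv (x := 1 + 1/x) (by linarith) (by linarith) (by linarith)).comp x
      (((hasDerivAt_const x (1:ℝ)).div (hasDerivAt_id x) hx0).const_add 1)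
    have d2 := (LAux_deriv (x := 1 - x^2) (by nlinarith) (by nlinarith) (by nlinarith)).comp x
      ((hasDerivAt_pow 2 x).const_sub 1)
    have d3 := (LAux_deriv (x := 1 - x) (by linarith) (by linarith) (by linarith)).comp x
      ((hasDerivAt_id x).const_sub 1)
    have d4 := ((Real.hasDerivAt_log hx0).pow 2)
    convert! (((d1.const_mul 2).add d2).sub (d3.const_mul 2)).add d4 using 1
    have e1 : Real.log (1 - (1 + 1/x)) = -Real.log x := by
      rw [← Real.log_inv, ← Real.log_neg_eq_log x⁻¹]
      congr 1
      field_simp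
      ring
    have e2 : Real.log (1 - (1 - x^2)) = 2 * Real.log x := by
      rw [sub_sub_cancel, Real.log_pow]; norm_num
    have e3 : Real.log (1 - (1 - x)) = Real.log x := by
      rw [sub_sub_cancel]
    simp only [gAux, e1, e2, e3, id]
    have n1 : 1 - x ≠ 0 := by linarith
    have n2 : 1 + x ≠ 0 := by linarith
    have n3 : 1 - x^2 ≠ 0 := by nlinarith
    have n4 : 1 + 1/x = (1 + x)/x := by field_simp; ring
    have n5 : 1 - x^2 = (1 - x) * (1 + x) := by ring
    rw [n4, n5]
    field_simp
    ring

theorem beta_nat (n : ℕ) : ∀ m : ℕ, (∫ x in (0:ℝ)..1, x ^ m * (1 - x) ^ n) *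
    ((m + n + 1).factorial : ℝ) = m.factorial * n.factorial := by
  induction n with
  | zero =>
    intro m
    simp only [pow_zero, mul_one, integral_pow, Nat.add_zero, Nat.factorial_succ]
    push_cast
    simp
    field_simp
  | succ n ih =>
    intro m
    have h := ih (m + 1)
    have key : ((m:ℝ) + 1) * (∫ x in (0:ℝ)..1, x ^ m * (1 - x) ^ (n + 1)) =
        ((n:ℝ) + 1) * ∫ x in (0:ℝ)..1, x ^ (m + 1) * (1 - x) ^ n := by
      have hd : ∀ x ∈ Set.uIcc (0:ℝ) 1, HasDerivAt (fun x : ℝ => x ^ (m + 1) * (1 - x) ^ (n + 1))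
          (((m:ℝ) + 1) * (x ^ m * (1 - x) ^ (n + 1)) -
            ((n:ℝ) + 1) * (x ^ (m + 1) * (1 - x) ^ n)) x := by
        intro x _
        have := (hasDerivAt_pow (m + 1) x).mul (((hasDerivAt_id x).const_sub 1).pow (n + 1))
        convert! this using 1
        simp
        ring
      have := intervalIntegral.integral_eq_sub_of_hasDerivAt hd
        (Continuous.intervalIntegrable (by fun_prop) _ _)
      rw [intervalIntegral.integral_sub (Continuous.intervalIntegrable (by fun_prop) _ _)
        (Continuous.intervalIntegrable (by fun_prop) _ _),
        intervalIntegral.integral_const_mul, intervalIntegral.integral_const_mul] at this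
      simp at this
      linarith
    rw [show m + 1 + n + 1 = m + (n + 1) + 1 by ring, Nat.factorial_succ m] at h
    rw [Nat.factorial_succ n]
    push_cast at h ⊢
    have hm : (m:ℝ) + 1 ≠ 0 := by positivity
    apply mul_left_cancel₀ hm
    rw [← mul_assoc, key, mul_assoc, h]
    ring

theorem main_sum : HasSum (fun k : ℕ => (27/4 : ℝ)^(k+1) /
    (((k:ℝ)+1)^2 * (((3*(k+1)).choose (k+1) : ℕ) : ℝ))) (2 * LAux 3 + LAux (3/4)) := by
  have i1 : IntervalIntegrable (fun x => gAux (3 * x)) MeasureTheory.volume 0 1 := by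
    have := gAux_int.comp_mul_left (c := 3)
    simpa using this
  have i2 : IntervalIntegrable (fun x => gAux (3/4 * x)) MeasureTheory.volume 0 1 := by
    have := (gAux_int' (a := 0) (b := 3/4) ⟨le_rfl, by norm_num⟩
      ⟨by norm_num, by norm_num⟩).comp_mul_left (c := 3/4)
    simpa using this
  have hI : (∫ x in (0:ℝ)..1, (6 * gAux (3 * x) + 3/4 * gAux (3/4 * x))) =
      2 * LAux 3 + LAux (3/4) := by
    rw [intervalIntegral.integral_add (i1.const_mul _) (i2.const_mul _),
      intervalIntegral.integral_const_mul, intervalIntegral.integral_const_mul,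
      intervalIntegral.integral_comp_mul_left gAux (by norm_num),
      intervalIntegral.integral_comp_mul_left gAux (by norm_num)]
    simp only [LAux, smul_eq_mul, mul_zero, mul_one]
    ring
  rw [← hI]
  have h := hasSum_aux (F := fun (k : ℕ) x => (27/4 : ℝ)^(k+1) / ((k:ℝ) + 1) *
      (x ^ k * (1 - x) ^ (2 * k + 2)))
      (f := fun x => 6 * gAux (3 * x) + 3/4 * gAux (3/4 * x)) (fun n => by fun_prop) ?_
      ((i1.const_mul _).add (i2.const_mul _)) ?_
  · convert! h using 1
    ext k
    rw [intervalIntegral.integral_const_mul]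
    have hb := beta_nat (2 * k + 2) k
    have hc := Nat.choose_mul_factorial_mul_factorial (n := 3*(k+1)) (k := k+1) (by omega)
    rw [show 3 * (k+1) - (k+1) = 2 * k + 2 by omega,
      show 3 * (k+1) = k + (2*k+2) + 1 by ring] at hc
    rw [show 3 * (k+1) = k + (2*k+2) + 1 by ring]
    rw [← hc, Nat.factorial_succ k] at hb
    push_cast at hb
    have f1 : ((k.factorial : ℕ) : ℝ) ≠ 0 := by positivity
    have f2 : (((2*k+2).factorial : ℕ) : ℝ) ≠ 0 := by positivity
    have hcpos : (((k + (2*k+2) + 1).choose (k+1) : ℕ) : ℝ) ≠ 0 := by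
      have := Nat.choose_pos (n := k + (2*k+2) + 1) (k := k+1) (by omega)
      positivity
    have hk : (k:ℝ) + 1 ≠ 0 := by positivity
    have hv : (∫ x in (0:ℝ)..1, x ^ k * (1 - x) ^ (2 * k + 2)) *
        ((((k + (2*k+2) + 1).choose (k+1) : ℕ) : ℝ) * ((k:ℝ) + 1)) = 1 := by
      apply mul_right_cancel₀ (mul_ne_zero f1 f2)
      linarith
    rw [eq_div_of_mul_eq (mul_ne_zero hcpos hk) hv]
    field_simp
  · intro k x hx
    have h0 := hx.1
    have h1 : 0 ≤ 1 - x := by linarith [hx.2]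
    positivity
  · filter_upwards [ae_ne (1/3)] with x hx3 hx
    obtain ⟨h0, h1⟩ := hx
    have n1 : 1 - 3 * x ≠ 0 := fun h => hx3 (by linarith)
    have n2 : 0 < 1 - 3/4 * x := by linarith
    have hfac : 1 - 27/4 * x * (1 - x)^2 = (1 - 3 * x)^2 * (1 - 3/4 * x) := by ring
    have hpos : 0 < 1 - 27/4 * x * (1 - x)^2 := by rw [hfac]; positivity
    have hs := (Real.hasSum_pow_div_log_of_abs_lt_one (x := 27/4 * x * (1 - x)^2)
      (by rw [abs_of_nonneg (by positivity)]; linarith)).div_const x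
    rw [hfac, Real.log_mul (by positivity) n2.ne', Real.log_pow] at hs
    convert! hs using 1
    · ext k
      rw [mul_pow, mul_pow, ← pow_mul, pow_succ x k, show 2 * (k+1) = 2*k+2 by ring]
      field_simp
    · unfold gAux
      push_cast
      field_simp
      ring

theorem stmt_1 :
    ∑' k : ℕ, (27/4 : ℝ)^(k+1) / (((k:ℝ)+1)^2 * (((3*(k+1)).choose (k+1) : ℕ) : ℝ)) =
    2*π^2/3 - 2*(Real.log 2)^2 := by
  rw [main_sum.tsum_eq, LAux_three]
  have := LAux_two
  linarith
end

section
/- ∑_{k=1}^∞ 6^k / (k² · C(3k,k)) = 6·arctan²(√3/(2·2^{1/3} − 1)) − (1/2)·log²(3/(2^{1/3}+1)³). -/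
open Real

theorem aux_beta (m : ℕ) : ∀ n : ℕ, ((m+n+1).factorial : ℝ) * ∫ t in (0:ℝ)..1, t^m * (1-t)^n
    = (m.factorial : ℝ) * (n.factorial : ℝ) := by
  induction m with
  | zero =>
    intro n
    have h1 : ∫ t in (0:ℝ)..1, t^0 * (1-t)^n = ∫ t in (0:ℝ)..1, t^n := by
      have := intervalIntegral.integral_comp_sub_left (a := 0) (b := 1) (fun t : ℝ => t^n) 1
      simpa using this
    rw [h1, integral_pow]
    simp only [zero_add, Nat.factorial_succ]
    push_cast
    have : (n:ℝ)+1 ≠ 0 := by positivity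
    field_simp
    simp
  | succ m ih =>
    intro n
    have h0 := ih (n+1)
    have hd : ∀ t ∈ Set.uIcc (0:ℝ) 1, HasDerivAt (fun t : ℝ => t^(m+1) * (1-t)^(n+1))
        (((m:ℝ)+1) * (t^m * (1-t)^(n+1)) - ((n:ℝ)+1) * (t^(m+1) * (1-t)^n)) t := by
      intro t _
      have := (hasDerivAt_pow (m+1) t).mul (((hasDerivAt_id t).const_sub 1).pow (n+1))
      refine HasDerivAt.congr_deriv this ?_
      symm
      simp
      ring
    have hi := intervalIntegral.integral_eq_sub_of_hasDerivAt hd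
      (Continuous.intervalIntegrable (by fun_prop) _ _)
    rw [intervalIntegral.integral_sub (Continuous.intervalIntegrable (by fun_prop) _ _)
      (Continuous.intervalIntegrable (by fun_prop) _ _),
      intervalIntegral.integral_const_mul, intervalIntegral.integral_const_mul] at hi
    simp only [sub_self, one_pow, ne_eq, Nat.add_eq_zero_iff, one_ne_zero, and_false,
      not_false_eq_true, zero_pow, mul_zero, zero_mul] at hi
    have e : m + 1 + n + 1 = m + (n+1) + 1 := by ring
    rw [e]
    have hn : (n:ℝ)+1 ≠ 0 := by positivity
    apply mul_left_cancel₀ hn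
    simp only [Nat.factorial_succ n, Nat.factorial_succ m] at h0 ⊢
    push_cast at h0 ⊢
    linear_combination ((m:ℝ)+1) * h0 - ((m + (n+1) + 1).factorial : ℝ) * hi

theorem aux_coef (k : ℕ) : ∫ t in (0:ℝ)..1, t^k * (1-t)^(2*k+2)
    = 1 / (((k:ℝ)+1) * (((3*(k+1)).choose (k+1) : ℕ) : ℝ)) := by
  have h := aux_beta k (2*k+2)
  have hc := Nat.choose_mul_factorial_mul_factorial (n := 3*(k+1)) (k := k+1) (by omega)
  have e : 3*(k+1) - (k+1) = 2*k+2 := by omega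
  have e2 : k + (2*k+2) + 1 = 3*(k+1) := by ring
  rw [e] at hc
  rw [e2, ← hc] at h
  rw [Nat.factorial_succ k] at h
  push_cast at h
  have f1 : (k.factorial : ℝ) ≠ 0 := by positivity
  have f2 : ((2*k+2).factorial : ℝ) ≠ 0 := by positivity
  have f3 : ((3*(k+1)).choose (k+1) : ℝ) ≠ 0 := by
    have := Nat.choose_pos (n := 3*(k+1)) (k := k+1) (by omega)
    positivity
  have f4 : (k:ℝ)+1 ≠ 0 := by positivity
  rw [eq_div_iff (by positivity)]
  apply mul_left_cancel₀ (mul_ne_zero f1 f2)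
  linear_combination h

theorem aux_cubic {t : ℝ} (h0 : 0 ≤ t) (h1 : t ≤ 1) : t*(1-t)^2 ≤ 4/27 := by
  nlinarith [mul_nonneg (sq_nonneg (t-1/3)) (by linarith : (0:ℝ) ≤ 4/3 - t)]

theorem aux_coef_le (k : ℕ) : 1 / (((k:ℝ)+1) * (((3*(k+1)).choose (k+1) : ℕ) : ℝ)) ≤ (4/27:ℝ)^k := by
  rw [← aux_coef]
  have : ∫ t in (0:ℝ)..1, (4/27:ℝ)^k = (4/27:ℝ)^k := by simp
  rw [← this]
  apply intervalIntegral.integral_mono_on (by norm_num)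
    (Continuous.intervalIntegrable (by fun_prop) _ _) (Continuous.intervalIntegrable (by fun_prop) _ _)
  rintro t ⟨h0, h1⟩
  have e : t^k * (1-t)^(2*k+2) = (t*(1-t)^2)^k * (1-t)^2 := by
    rw [mul_pow, pow_add, pow_mul]; ring
  rw [e]
  have a1 : (t*(1-t)^2)^k ≤ (4/27:ℝ)^k := pow_le_pow_left₀ (by positivity) (aux_cubic h0 h1) k
  have a2 : (1-t)^2 ≤ 1 := by nlinarith
  calc _ ≤ (4/27:ℝ)^k * 1 := by gcongr
    _ = _ := mul_one _

/-- the power series -/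
noncomputable def SS (x : ℝ) : ℝ :=
  ∑' k : ℕ, x^(k+1) / (((k:ℝ)+1)^2 * (((3*(k+1)).choose (k+1) : ℕ) : ℝ))

theorem aux_int (x : ℝ) (hx0 : 0 ≤ x) (hx : x ≤ 6) :
    ∑' k : ℕ, x^k / (((k:ℝ)+1) * (((3*(k+1)).choose (k+1) : ℕ) : ℝ))
     = ∫ t in (0:ℝ)..1, (1-t)^2 / (1 - x*t*(1-t)^2) := by
  have key : HasSum (fun k : ℕ => ∫ t in (0:ℝ)..1, (x*(t*(1-t)^2))^k * (1-t)^2)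
     (∫ t in (0:ℝ)..1, (1-t)^2 / (1 - x*t*(1-t)^2)) := by
    have hs : Summable fun n : ℕ => (24/27:ℝ)^n :=
      summable_geometric_of_lt_one (by norm_num) (by norm_num)
    have hb : ∀ t : ℝ, t ∈ Set.uIoc (0:ℝ) 1 → 0 ≤ x*(t*(1-t)^2) ∧ x*(t*(1-t)^2) ≤ 24/27
        ∧ (1-t)^2 ≤ 1 := by
      intro t ht
      rw [Set.uIoc_of_le (by norm_num)] at ht
      have h0 := ht.1.le
      have h1 := ht.2
      have h2 := aux_cubic h0 h1
      have h3 : 0 ≤ t*(1-t)^2 := by positivity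
      refine ⟨by positivity, by nlinarith, by nlinarith⟩
    apply intervalIntegral.hasSum_integral_of_dominated_convergence (fun n _ => (24/27:ℝ)^n)
    · intro n
      exact Continuous.aestronglyMeasurable (by fun_prop)
    · intro n
      refine Filter.Eventually.of_forall fun t ht => ?_
      obtain ⟨a, b, c⟩ := hb t ht
      rw [Real.norm_of_nonneg (by positivity)]
      calc _ ≤ (24/27:ℝ)^n * 1 := by gcongr
        _ = _ := mul_one _
    · exact Filter.Eventually.of_forall fun t ht => hs
    · simp
    · refine Filter.Eventually.of_forall fun t ht => ?_
      obtain ⟨a, b, c⟩ := hb t ht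
      have := (hasSum_geometric_of_lt_one a (by linarith)).mul_right ((1-t)^2)
      have e : (1-t)^2 / (1 - x*t*(1-t)^2) = (1 - x*(t*(1-t)^2))⁻¹ * (1-t)^2 := by
        rw [div_eq_mul_inv, mul_comm, mul_assoc x]
      rw [e]
      exact this
  rw [← key.tsum_eq]
  congr 1
  ext k
  rw [div_eq_mul_one_div, ← aux_coef, ← intervalIntegral.integral_const_mul]
  congr 1
  ext t
  rw [mul_pow, mul_pow, pow_add, pow_mul]; ring

theorem aux_deriv (x : ℝ) (hx0 : 0 ≤ x) (hx : x ≤ 6) :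
    HasDerivAt SS (∫ t in (0:ℝ)..1, (1-t)^2 / (1 - x*t*(1-t)^2)) x := by
  rw [← aux_int x hx0 hx]
  have hs : Summable fun n : ℕ => (26/27:ℝ)^n :=
    summable_geometric_of_lt_one (by norm_num) (by norm_num)
  unfold SS
  refine hasDerivAt_tsum_of_isPreconnected hs (t := Set.Ioo (-13/2) (13/2)) (y₀ := 0) isOpen_Ioo
    isPreconnected_Ioo ?_ ?_ (by norm_num) ?_ ⟨by linarith, by linarith⟩
    (g' := fun (k:ℕ) (y:ℝ) => y^k / (((k:ℝ)+1) * (((3*(k+1)).choose (k+1) : ℕ) : ℝ)))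
  · intro n y _
    have := (hasDerivAt_pow (n+1) y).div_const (((n:ℝ)+1)^2 * (((3*(n+1)).choose (n+1) : ℕ) : ℝ))
    refine HasDerivAt.congr_deriv this ?_
    symm
    have f3 : ((3*(n+1)).choose (n+1) : ℝ) ≠ 0 := by
      have := Nat.choose_pos (n := 3*(n+1)) (k := n+1) (by omega)
      positivity
    have f4 : (n:ℝ)+1 ≠ 0 := by positivity
    push_cast
    try simp only [Nat.add_sub_cancel]
    field_simp
  · intro n y hy
    rw [div_eq_mul_one_div, norm_mul, norm_pow, Real.norm_eq_abs]
    have h1 : |y| ≤ 13/2 := abs_le.2 ⟨by linarith [hy.1], hy.2.le⟩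
    rw [Real.norm_of_nonneg (by positivity)]
    calc _ ≤ (13/2:ℝ)^n * (4/27)^n := by
          gcongr
          exact aux_coef_le n
      _ = _ := by rw [← mul_pow]; norm_num
  · simp [summable_zero]

theorem aux_arctan (y : ℝ) (h0 : 0 < y) (h1 : y < 1) :
    arctan ((1+y)/(√3*(1-y))) + arctan ((4*y-1-y^2)/(√3*(1-y^2))) = 3 * arctan (√3*y/(2-y)) := by
  have w2 : √3^2 = 3 := Real.sq_sqrt (by norm_num)
  have wp : 0 < √3 := by positivity
  have p1 : 0 < 1 - y := by linarith
  have p2 : 0 < 2 - y := by linarith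
  have p3 : 0 < 1 - y^2 := by nlinarith
  have e1 : arctan (√3*y/(2-y)) + arctan (1/√3) = arctan ((1+y)/(√3*(1-y))) := by
    have hp : √3*y/(2-y) * (1/√3) = y/(2-y) := by field_simp
    have hl : y/(2-y) < 1 := by rw [div_lt_one p2]; linarith
    rw [arctan_add (by rw [hp]; exact hl), hp]
    congr 1
    have : 1 - y/(2-y) ≠ 0 := by linarith
    have e : 1 - y/(2-y) = 2*(1-y)/(2-y) := by field_simp; ring
    rw [e]
    field_simp
    rw [w2]; ring
  have e2 : arctan (√3*y/(2-y)) + arctan (-(1/√3)) = arctan ((2*y-1)/√3) := by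
    have hp : √3*y/(2-y) * (-(1/√3)) = -(y/(2-y)) := by field_simp
    have hl : 0 < y/(2-y) := by positivity
    rw [arctan_add (by rw [hp]; linarith), hp]
    congr 1
    have e : 1 - -(y/(2-y)) = 2/(2-y) := by field_simp; ring
    rw [e]
    field_simp
    rw [w2]; ring
  have e3 : arctan (√3*y/(2-y)) + arctan ((2*y-1)/√3) = arctan ((4*y-1-y^2)/(√3*(1-y^2))) := by
    have hp : √3*y/(2-y) * ((2*y-1)/√3) = y*(2*y-1)/(2-y) := by field_simp
    have hl : y*(2*y-1)/(2-y) < 1 := by rw [div_lt_one p2]; nlinarith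
    rw [arctan_add (by rw [hp]; exact hl), hp]
    congr 1
    have e : 1 - y*(2*y-1)/(2-y) = 2*(1-y^2)/(2-y) := by field_simp; ring
    rw [e]
    field_simp
    rw [w2]; ring
  rw [arctan_neg] at e2
  linarith

/-- the parametrisation -/
noncomputable def XX (y : ℝ) : ℝ := 27*y^3/(1+y^3)^2

theorem aux_T (y : ℝ) (h0 : 0 < y) (h1 : y < 1) :
    XX y * (1-y^3) * ∫ t in (0:ℝ)..1, (1-t)^2 / (1 - XX y*t*(1-t)^2)
    = y*(2*√3*arctan (√3*y/(2-y))*(1+y) + (1-y)*log ((1+y^3)/(1+y)^3)) := by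
  have w2 : √3^2 = 3 := Real.sq_sqrt (by norm_num)
  have wp : 0 < √3 := by positivity
  have p1 : 0 < 1 - y := by linarith
  have p3 : 0 < 1 - y^2 := by nlinarith
  have p4 : 0 < 1 - y + y^2 := by nlinarith
  have p5 : 0 < 1 + y + y^2 := by positivity
  have p6 : 1 + y^3 = (1+y)*(1-y+y^2) := by ring
  have p7 : 0 < 1 - y^3 := by nlinarith
  set N := 1 - y + y^2 with hN
  set s := 3*y/(1+y)^2 with hs
  set d := 9*y^2/N^2 with hd
  set p := 3*y*(4*y-1-y^2)/(2*N^2) with hp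
  set q := 3*y*√3*(1-y^2)/(2*N^2) with hq
  have hq0 : 0 < q := by positivity
  have hd0 : d = p^2+q^2 := by
    rw [hd, hp, hq, div_pow, div_pow]
    field_simp
    rw [w2, hN]
    ring
  have hs1 : s < 1 := by
    rw [hs, div_lt_one (by positivity)]; nlinarith
  have hsp : 0 < s := by positivity
  have hfac : ∀ t : ℝ, 1 - XX y*t*(1-t)^2 = (1-s*t)*(1-2*p*t+d*t^2) := by
    intro t
    rw [XX, p6, hs, hp, hd]
    field_simp
    rw [hN]
    ring
  have hL : ∀ t : ℝ, t ∈ Set.uIcc (0:ℝ) 1 → 0 < 1 - s*t := by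
    intro t ht
    rw [Set.uIcc_of_le (by norm_num)] at ht
    nlinarith [ht.1, ht.2]
  have hQ : ∀ t : ℝ, 0 < 1 - 2*p*t + d*t^2 := by
    intro t
    have : 1 - 2*p*t + d*t^2 = (1-p*t)^2 + (q*t)^2 := by rw [hd0]; ring
    rw [this]
    by_cases ht : t = 0
    · subst ht; norm_num
    · positivity
  have hder : ∀ t ∈ Set.uIcc (0:ℝ) 1, HasDerivAt (fun t : ℝ =>
      -((1-y)*N/3) * log (1-s*t) - ((1+y-y^2-y^3)/3) * log (1-2*p*t+d*t^2)
       + 2*√3*y*(1+y)/3 * arctan ((d*t-p)/q))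
      (XX y * (1-y^3) * ((1-t)^2 / (1 - XX y*t*(1-t)^2))) t := by
    intro t ht
    have l0 := hL t ht
    have q0 := hQ t
    have d1 : HasDerivAt (fun t : ℝ => 1-s*t) (-s) t := by
      simpa using ((hasDerivAt_id t).const_mul s).const_sub 1
    have d2 : HasDerivAt (fun t : ℝ => 1-2*p*t+d*t^2) (-(2*p)+d*(2*t)) t := by
      refine HasDerivAt.congr_deriv ((((hasDerivAt_id t).const_mul (2*p)).const_sub 1).add
        ((hasDerivAt_pow 2 t).const_mul d)) ?_
      simp
    have d3 : HasDerivAt (fun t : ℝ => (d*t-p)/q) (d/q) t := by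
      simpa using (((hasDerivAt_id t).const_mul d).sub_const p).div_const q
    have D := (((d1.log l0.ne').const_mul (-((1-y)*N/3))).sub
      ((d2.log q0.ne').const_mul ((1+y-y^2-y^3)/3))).add (d3.arctan.const_mul (2*√3*y*(1+y)/3))
    refine HasDerivAt.congr_deriv D ?_
    symm
    rw [hfac t]
    have ea : 1/(1+((d*t-p)/q)^2) * (d/q) = q/(1-2*p*t+d*t^2) := by
      have : 1+((d*t-p)/q)^2 = d*(1-2*p*t+d*t^2)/q^2 := by
        field_simp
        linear_combination (-1) * hd0
      rw [this]
      have : d ≠ 0 := by positivity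
      field_simp
    rw [ea]
    have eq : 2*√3*y*(1+y)/3 * (q/(1-2*p*t+d*t^2))
      = (3*y^2*(1+y)*(1-y^2)/N^2) / (1-2*p*t+d*t^2) := by
      rw [hq]; field_simp; rw [w2]
    rw [eq]
    have : XX y * (1 - y ^ 3) * (1-t)^2 = ((1-y)*N/3)*s*(1-2*p*t+d*t^2)
      - ((1+y-y^2-y^3)/3)*(-(2*p)+d*(2*t))*(1-s*t) + (3*y^2*(1+y)*(1-y^2)/N^2)*(1-s*t) := by
      rw [XX, p6, hs, hp, hd]
      field_simp
      rw [hN]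
      ring
    rw [← mul_div_assoc, this]
    generalize 1-2*p*t+d*t^2 = Q at q0
    generalize 1-s*t = M at l0
    have q1 := q0.ne'
    have l1 := l0.ne'
    field_simp
  rw [← intervalIntegral.integral_const_mul, intervalIntegral.integral_eq_sub_of_hasDerivAt hder]
  · have hA := aux_arctan y h0 h1
    have a1 : (d*1-p)/q = (1+y)/(√3*(1-y)) := by
      rw [hp, hq, hd]
      have : 1 - y^2 = (1-y)*(1+y) := by ring
      rw [this]
      field_simp
      ring
    have a2 : (d*0-p)/q = -((4*y-1-y^2)/(√3*(1-y^2))) := by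
      rw [hp, hq]
      field_simp
      ring
    have b1 : 1 - s*1 = (1+y^3)/(1+y)^3 := by
      rw [p6, hs, hN]; field_simp; ring
    have b2 : 1-2*p*1+d*1^2 = ((1+y^3)/(1+y)^3)⁻¹ := by
      rw [p6, hp, hd]; field_simp; rw [hN]; ring
    simp only [a1, a2, b1, b2, log_inv, arctan_neg]
    simp only [mul_zero, sub_zero, log_one]
    norm_num
    rw [hN]
    linear_combination (2*√3*y*(1+y)/3) * hA
  · apply ContinuousOn.intervalIntegrable
    intro t ht
    have l0 := hL t ht
    have q0 := hQ t
    have : 1 - XX y*t*(1-t)^2 ≠ 0 := by rw [hfac]; positivity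
    apply ContinuousAt.continuousWithinAt
    fun_prop (disch := assumption)

theorem aux_X (y : ℝ) (h0 : 0 ≤ y) (h1 : y^3 ≤ 1/2) : 0 ≤ XX y ∧ XX y ≤ 6 := by
  unfold XX
  have : 0 ≤ y^3 := by positivity
  refine ⟨by positivity, ?_⟩
  rw [div_le_iff₀ (by positivity)]
  nlinarith

theorem aux_main (b : ℝ) (h0 : 0 < b) (h1 : b^3 = 1/2) :
    SS (XX b) = 6*(arctan (√3*b/(2-b)))^2 - 1/2*(log ((1+b^3)/(1+b)^3))^2 := by
  have w2 : √3^2 = 3 := Real.sq_sqrt (by norm_num)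
  have b1 : b < 1 := by
    by_contra h
    have := one_le_pow₀ (not_lt.1 h) (n := 3)
    linarith
  have hder : ∀ y : ℝ, 0 ≤ y → y ≤ b → HasDerivAt
      (fun y => SS (XX y) - (6*(arctan (√3*y/(2-y)))^2 - 1/2*(log ((1+y^3)/(1+y)^3))^2)) 0 y := by
    intro y y0 yb
    have y3 : y^3 ≤ 1/2 := by rw [← h1]; gcongr
    have y1 : y < 1 := by linarith
    have p2 : 0 < 2 - y := by linarith
    have p4 : 0 < 1 - y + y^2 := by nlinarith
    have p6 : 1 + y^3 = (1+y)*(1-y+y^2) := by ring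
    have p7 : 0 < 1 + y^3 := by positivity
    obtain ⟨x0, x6⟩ := aux_X y y0 y3
    have dp3 : HasDerivAt (fun y : ℝ => 1+y^3) (3*y^2) y := by
      simpa using (hasDerivAt_pow 3 y).const_add 1
    have dX : HasDerivAt XX (81*y^2*(1-y^3)/(1+y^3)^3) y := by
      have := ((hasDerivAt_pow 3 y).const_mul 27).div (dp3.pow 2) (pow_pos p7 2).ne'
      refine HasDerivAt.congr_deriv this ?_
      symm
      simp
      field_simp
      ring
    have dS := (aux_deriv (XX y) x0 x6).comp y dX
    have dA : HasDerivAt (fun y : ℝ => arctan (√3*y/(2-y))) (√3/(2*(1-y+y^2))) y := by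
      have := ((((hasDerivAt_id' y).const_mul √3)).fun_div ((hasDerivAt_id' y).const_sub 2) p2.ne').arctan
      refine HasDerivAt.congr_deriv this ?_
      symm
      have e : 1 + (√3*y/(2-y))^2 = 4*(1-y+y^2)/(2-y)^2 := by
        field_simp; rw [w2]; ring
      rw [e]
      field_simp
      ring
    have dL : HasDerivAt (fun y : ℝ => log ((1+y^3)/(1+y)^3)) (-3*(1-y)/(1+y^3)) y := by
      have d1 : HasDerivAt (fun y : ℝ => (1+y)^3) (3*(1+y)^2) y := by
        refine HasDerivAt.congr_deriv (((hasDerivAt_id y).const_add 1).pow 3) ?_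
        simp
      have q1 : (1+y)^3 ≠ 0 := by positivity
      have q2 : (1+y^3)/(1+y)^3 ≠ 0 := by positivity
      have : HasDerivAt (fun y : ℝ => log ((1+y^3)/(1+y)^3)) _ y := (dp3.fun_div d1 q1).log q2
      refine HasDerivAt.congr_deriv this ?_
      symm
      rw [p6]
      field_simp
      ring
    have D := dS.sub (((dA.pow 2).const_mul 6).sub ((dL.pow 2).const_mul (1/2)))
    refine HasDerivAt.congr_deriv D ?_
    symm
    rcases y0.eq_or_lt with hy | hy
    · subst hy; simp
    · have hT := aux_T y hy y1
      set I := ∫ t in (0:ℝ)..1, (1-t)^2 / (1 - XX y*t*(1-t)^2)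
      have e : I * (81*y^2*(1-y^3)/(1+y^3)^3) = 3/(y*(1+y^3)) * (XX y*(1-y^3)*I) := by
        unfold XX; field_simp; ring
      rw [e, hT, p6]
      simp
      field_simp
      ring
  obtain ⟨c, _, hc⟩ := exists_hasDerivAt_eq_slope _ (fun _ => (0:ℝ)) h0
    (fun y hy => (hder y hy.1 hy.2).continuousAt.continuousWithinAt)
    (fun y hy => hder y hy.1.le hy.2.le)
  rw [eq_div_iff (by linarith)] at hc
  have hS0 : SS (XX 0) = 0 := by simp [SS, XX]
  simp only [hS0] at hc
  norm_num at hc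
  linarith

theorem stmt_3 :
    ∑' k : ℕ, (6 : ℝ)^(k+1) / (((k:ℝ)+1)^2 * (((3*(k+1)).choose (k+1) : ℕ) : ℝ)) =
    6*(Real.arctan (Real.sqrt 3/(2*(2:ℝ)^((1:ℝ)/3) - 1)))^2 - (1/2)*(Real.log (3/((2:ℝ)^((1:ℝ)/3)+1)^3))^2 := by
  have hc0 : 0 < (2:ℝ)^((1:ℝ)/3) := by positivity
  have hc3 : ((2:ℝ)^((1:ℝ)/3))^3 = 2 := by
    rw [← Real.rpow_natCast, ← Real.rpow_mul (by norm_num)]; norm_num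
  set c := (2:ℝ)^((1:ℝ)/3)
  have c1 : 1 < c := by
    by_contra h
    have := pow_le_one₀ hc0.le (not_lt.1 h) (n := 3)
    linarith
  have hb3 : (1/c)^3 = 1/2 := by rw [div_pow, hc3]; norm_num
  have h := aux_main (1/c) (by positivity) hb3
  have hX : XX (1/c) = 6 := by unfold XX; rw [mul_div_assoc, hb3]; norm_num
  have e1 : √3*(1/c)/(2-1/c) = √3/(2*c-1) := by
    have : 2 - 1/c = (2*c-1)/c := by field_simp
    have h2 : 2*c-1 ≠ 0 := by linarith
    rw [this]; field_simp
  have e2 : (1+(1/c)^3)/(1+1/c)^3 = 3/(c+1)^3 := by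
    have : 1+1/c = (c+1)/c := by field_simp
    rw [hb3, this, div_pow, hc3]; field_simp; norm_num
  rw [hX, e1, e2] at h
  exact h
end
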